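/- arXiv:cs/0207060 — 2 statements merged into one kernel-verified Lean document; each statement's English description precedes it below -/
import Mathlib

section
/- For any ordered logic program (Π,<), if the least fixpoint X of A_{(Π,<)} is itself a fixpoint of C_{(Π,<)} (i.e., the corresponding well-founded model is two-valued), then X is the unique preferred answer set of (Π,<): C_{(Π,<)}(X)=X and every set Z with C_{(Π,<)}(Z)=Z equals X. -/
open scoped Classical

/-- A literal: an atom `A` or its classical negation `¬A`. -/
inductive Lit (α : Type) : Type
  | pos : α → Lit α
  | neg : α → Lit α

/-- A rule with a head literal and finite positive and negative bodies. -/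
structure Rule (α : Type) where
  head : Lit α
  pbody : Finset (Lit α)
  nbody : Finset (Lit α)

/-- A program is a set of rules (finiteness is stated as a hypothesis). -/
abbrev Program (α : Type) := Set (Rule α)

/-- `X` is consistent if it contains no complementary pair. -/
def Consistent {α : Type} (X : Set (Lit α)) : Prop :=
  ¬ ∃ A : α, Lit.pos A ∈ X ∧ Lit.neg A ∈ X

/-- `X` is logically closed if it is consistent or equals the set of all literals. -/
def LogClosed {α : Type} (X : Set (Lit α)) : Prop :=
  Consistent X ∨ X = Set.univ

/-- `X` is closed under (basic) program `P`. -/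
def ClosedUnder {α : Type} (P : Program α) (X : Set (Lit α)) : Prop :=
  ∀ r ∈ P, ↑r.pbody ⊆ X → r.head ∈ X

/-- `Cn P` : the smallest logically closed set closed under basic program `P`. -/
def Cn {α : Type} (P : Program α) : Set (Lit α) :=
  ⋂₀ {X | LogClosed X ∧ ClosedUnder P X}

/-- The reduct of `P` relative to `X`. -/
def reduct {α : Type} (P : Program α) (X : Set (Lit α)) : Program α :=
  {s | ∃ r ∈ P, (↑r.nbody ∩ X = (∅ : Set (Lit α))) ∧ s = ⟨r.head, r.pbody, ∅⟩}

/-- A program is basic if all its rules have empty negative body. -/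
def IsBasic {α : Type} (P : Program α) : Prop := ∀ r ∈ P, r.nbody = ∅

/-- `C_Π(X) = Cn(Π^X)`. -/
noncomputable def Cop {α : Type} (P : Program α) (X : Set (Lit α)) : Set (Lit α) :=
  Cn (reduct P X)

/-- `A_Π(X) = C_Π(C_Π(X))`. -/
noncomputable def Aop {α : Type} (P : Program α) (X : Set (Lit α)) : Set (Lit α) :=
  Cop P (Cop P X)

/-- `X` is an answer set of `P` iff `Cn(P^X) = X`. -/
def AnswerSet {α : Type} (P : Program α) (X : Set (Lit α)) : Prop :=
  Cn (reduct P X) = X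

/-- Immediate consequence operator for a basic program. -/
noncomputable def T {α : Type} (P : Program α) (X : Set (Lit α)) : Set (Lit α) :=
  if Consistent X then {L | ∃ r ∈ P, ↑r.pbody ⊆ X ∧ L = r.head} else Set.univ

/-- `r` is active wrt `(X, Y)`. -/
def Active {α : Type} (r : Rule α) (X Y : Set (Lit α)) : Prop :=
  ↑r.pbody ⊆ X ∧ ↑r.nbody ∩ Y = (∅ : Set (Lit α))

/-- Extended immediate consequence operator `T_{Π,Y}(X)`. -/
noncomputable def TE {α : Type} (P : Program α) (Y X : Set (Lit α)) : Set (Lit α) :=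
  if Consistent X then {L | ∃ r ∈ P, Active r X Y ∧ L = r.head} else Set.univ

/-- Preference-sensitive operator `T_{(Π,<),Y}(X)` (Definition 1). -/
noncomputable def TP {α : Type} (P : Program α) (lt : Rule α → Rule α → Prop)
    (Y X : Set (Lit α)) : Set (Lit α) :=
  if Consistent X then
    {L | ∃ r ∈ P, Active r X Y ∧
      (¬ ∃ r' ∈ P, lt r r' ∧ Active r' Y X ∧ r'.head ∉ X) ∧ L = r.head}
  else Set.univ

/-- `C_{(Π,<)}(X)` (Definition 2). -/
noncomputable def CP {α : Type} (P : Program α) (lt : Rule α → Rule α → Prop)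
    (X : Set (Lit α)) : Set (Lit α) :=
  ⋃ i : ℕ, (TP P lt X)^[i] ∅

/-- `A_{(Π,<)}(X) = C_{(Π,<)}(C_{(Π,<)}(X))`. -/
noncomputable def AP {α : Type} (P : Program α) (lt : Rule α → Rule α → Prop)
    (X : Set (Lit α)) : Set (Lit α) :=
  CP P lt (CP P lt X)

/-- The set `D^r_{(X,Y)}` of removable literals. -/
def D {α : Type} (P : Program α) (lt : Rule α → Rule α → Prop) (r : Rule α)
    (X Y : Set (Lit α)) : Set (Lit α) :=
  {L | ∀ r' ∈ P, r'.head = L → ↑r'.pbody ⊆ Y →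
      lt r' r ∧ ({r.head} ∪ X) ∩ ↑r'.nbody ≠ (∅ : Set (Lit α))}

/-- `T°_{(Π,<),Y}(X)` (Definition 3). -/
noncomputable def TN {α : Type} (P : Program α) (lt : Rule α → Rule α → Prop)
    (Y X : Set (Lit α)) : Set (Lit α) :=
  if Consistent X then
    {L | ∃ r ∈ P, Active r X (Y \ D P lt r X Y) ∧ L = r.head}
  else Set.univ

/-- `C°_{(Π,<)}(X)` (Definition 4). -/
noncomputable def CN {α : Type} (P : Program α) (lt : Rule α → Rule α → Prop)
    (X : Set (Lit α)) : Set (Lit α) :=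
  ⋃ i : ℕ, (TN P lt X)^[i] ∅

/-- `A°_{(Π,<)}(X) = C°_{(Π,<)}(C_Π(X))`. -/
noncomputable def AN {α : Type} (P : Program α) (lt : Rule α → Rule α → Prop)
    (X : Set (Lit α)) : Set (Lit α) :=
  CN P lt (Cop P X)

/-!
`T_{(Π,<),Y}(X)` is monotone in `X` and antitone in `Y`, so `C = C_{(Π,<)}` is antitone. Hence
comparable fixpoints of `C` coincide: from `X ⊆ Z` we get `Z = C(Z) ⊆ C(X) = X`. Every fixpoint
of `C` is a fixpoint of `A = C ∘ C`, hence lies above the least fixpoint of `A`.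
-/

open Function

theorem isAntichain_fixedPoints_of_antitone {β : Type*} [PartialOrder β] {f : β → β}
    (hf : Antitone f) : IsAntichain (· ≤ ·) (fixedPoints f) := by
  intro a ha b hb hne hab
  have hba : b ≤ a := calc
    b = f b := hb.symm
    _ ≤ f a := hf hab
    _ = a := ha
  exact hne (hab.antisymm hba)

section

variable {α : Type} {X X' Y Y' : Set (Lit α)}

theorem Consistent.anti (hX : X ⊆ X') (h : Consistent X') : Consistent X :=
  fun ⟨A, hpos, hneg⟩ => h ⟨A, hX hpos, hX hneg⟩

theorem Active.mono_anti {r : Rule α} (hX : X ⊆ X') (hY : Y ⊆ Y') (h : Active r X Y') :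
    Active r X' Y :=
  ⟨h.1.trans hX, Set.subset_eq_empty (Set.inter_subset_inter_right _ hY) h.2⟩

variable (P : Program α) (lt : Rule α → Rule α → Prop)

theorem TP_mono_anti (hX : X ⊆ X') (hY : Y ⊆ Y') : TP P lt Y' X ⊆ TP P lt Y X' := by
  by_cases hcons' : Consistent X'
  · have hcons : Consistent X := hcons'.anti hX
    simp only [TP, if_pos hcons, if_pos hcons']
    rintro _ ⟨r, hr, hact, hpref, rfl⟩
    refine ⟨r, hr, hact.mono_anti hX hY, ?_, rfl⟩
    -- A rule blocking `r` wrt `(X', Y)` would already block it wrt `(X, Y')`.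
    rintro ⟨r', hr', hlt, hact', hhead⟩
    exact hpref ⟨r', hr', hlt, hact'.mono_anti hY hX, fun h => hhead (hX h)⟩
  · simp only [TP, if_neg hcons', Set.subset_univ]

theorem CP_antitone : Antitone (CP P lt) := by
  intro Y Y' hY
  have hmono : Monotone (TP P lt Y') := fun _ _ hX => TP_mono_anti P lt hX subset_rfl
  have hle : TP P lt Y' ≤ TP P lt Y := fun _ => TP_mono_anti P lt subset_rfl hY
  exact Set.iUnion_mono fun i => hmono.iterate_le_of_le hle i ∅

theorem fixedPoints_CP_subset_fixedPoints_AP :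
    fixedPoints (CP P lt) ⊆ fixedPoints (AP P lt) :=
  fun _ hZ => IsFixedPt.comp hZ hZ

theorem twoValued_wfm_unique_preferredAnswerSet_general
    (hlower : X ∈ lowerBounds (fixedPoints (AP P lt))) (hfix : CP P lt X = X) :
    CP P lt X = X ∧ ∀ Z : Set (Lit α), CP P lt Z = Z → Z = X := by
  refine ⟨hfix, fun Z hZ => ?_⟩
  have hXZ : X ⊆ Z := hlower (fixedPoints_CP_subset_fixedPoints_AP P lt hZ)
  exact ((isAntichain_fixedPoints_of_antitone (CP_antitone P lt)).eq hfix hZ hXZ).symm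

end

/-- if the least fixpoint `X` of `A_{(Π,<)}` is itself a fixpoint
of `C_{(Π,<)}`, then `X` is the unique preferred answer set. -/
theorem twoValued_wfm_unique_preferredAnswerSet {α : Type} (P : Program α)
    (hfin : P.Finite) (lt : Rule α → Rule α → Prop)
    (hirr : ∀ r, ¬ lt r r) (htrans : ∀ r₁ r₂ r₃, lt r₁ r₂ → lt r₂ r₃ → lt r₁ r₃)
    (X : Set (Lit α))
    (hlfp : AP P lt X = X ∧ ∀ W, AP P lt W = W → X ⊆ W)
    (hfix : CP P lt X = X) :
    CP P lt X = X ∧ ∀ Z : Set (Lit α), CP P lt Z = Z → Z = X :=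
  twoValued_wfm_unique_preferredAnswerSet_general P lt (fun W hW => hlfp.2 W hW) hfix
end

section
/- For any ordered logic program (Π,<) and any set X of literals, C_Π(X) ⊆ C°_{(Π,<)}(X): the preference-based consequence operator derives at least the consequences of the standard operator. -/
/-!
Removing literals from the set against which negative bodies are tested only activates more rules,
so `TE` is pointwise contained in `TN`. As positive bodies are finite and an inconsistency involves
only two literals, `TE` commutes with directed unions, so the increasing union `CN` of the stages of
`TN` is closed under `TE`. Every set closed under `TE` contains `Cop`.
-/

open scoped Classical

section Consistency

variable {α : Type}

theorem Consistent.mono {X X' : Set (Lit α)} (hXX' : X ⊆ X') (hX' : Consistent X') :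
    Consistent X :=
  fun ⟨A, hpos, hneg⟩ => hX' ⟨A, hXX' hpos, hXX' hneg⟩

theorem Consistent.iUnion_of_directed {ι : Sort*} {Z : ι → Set (Lit α)}
    (hdir : Directed (· ⊆ ·) Z) (hZ : ∀ i, Consistent (Z i)) : Consistent (⋃ i, Z i) := by
  rintro ⟨A, hpos, hneg⟩
  obtain ⟨i, hi⟩ := Set.mem_iUnion.1 hpos
  obtain ⟨j, hj⟩ := Set.mem_iUnion.1 hneg
  obtain ⟨k, hik, hjk⟩ := hdir i j
  exact hZ k ⟨A, hik hi, hjk hj⟩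

end Consistency

section ImmediateConsequence

variable {α : Type} {P : Program α} {lt : Rule α → Rule α → Prop} {r : Rule α} {L : Lit α}
  {X X' Y Y' : Set (Lit α)}

theorem Active.mono (hX : X ⊆ X') (hY : Y' ⊆ Y) (hr : Active r X Y) : Active r X' Y' :=
  ⟨hr.1.trans hX, Set.subset_empty_iff.1 <| hr.2 ▸ Set.inter_subset_inter_right _ hY⟩

theorem mem_TE : L ∈ TE P Y X ↔ (Consistent X → ∃ r ∈ P, Active r X Y ∧ L = r.head) := by
  by_cases hX : Consistent X <;> simp [TE, hX]

theorem mem_TN :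
    L ∈ TN P lt Y X ↔
      (Consistent X → ∃ r ∈ P, Active r X (Y \ D P lt r X Y) ∧ L = r.head) := by
  by_cases hX : Consistent X <;> simp [TN, hX]

theorem TE_subset_TN : TE P Y X ⊆ TN P lt Y X := by
  intro L hL
  refine mem_TN.2 fun hX => ?_
  obtain ⟨r, hr, hactive, rfl⟩ := mem_TE.1 hL hX
  exact ⟨r, hr, hactive.mono subset_rfl Set.sdiff_subset, rfl⟩

theorem D_mono (hX : X ⊆ X') : D P lt r X Y ⊆ D P lt r X' Y := by
  intro L hL r' hr' hhead hpbody
  obtain ⟨hlt, hblocked⟩ := hL r' hr' hhead hpbody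
  rw [← Set.nonempty_iff_ne_empty] at hblocked
  exact ⟨hlt, (hblocked.mono (by gcongr)).ne_empty⟩

theorem TN_mono : Monotone (TN P lt Y) := by
  intro X X' hXX' L hL
  refine mem_TN.2 fun hX' => ?_
  obtain ⟨r, hr, hactive, rfl⟩ := mem_TN.1 hL (hX'.mono hXX')
  exact ⟨r, hr, hactive.mono hXX' (Set.sdiff_subset_sdiff_right (D_mono hXX')), rfl⟩

theorem TE_iUnion_subset_of_directed {ι : Type*} [Nonempty ι] {Z : ι → Set (Lit α)}
    (hdir : Directed (· ⊆ ·) Z) : TE P Y (⋃ i, Z i) ⊆ ⋃ i, TE P Y (Z i) := by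
  intro L hL
  rw [Set.mem_iUnion]
  by_cases hcons : ∀ i, Consistent (Z i)
  · obtain ⟨r, hr, ⟨hpbody, hnbody⟩, rfl⟩ :=
      mem_TE.1 hL (Consistent.iUnion_of_directed hdir hcons)
    obtain ⟨i, hi⟩ := hdir.exists_mem_subset_of_finset_subset_biUnion hpbody
    exact ⟨i, mem_TE.2 fun _ => ⟨r, hr, ⟨hi, hnbody⟩, rfl⟩⟩
  · obtain ⟨i, hi⟩ := not_forall.1 hcons
    exact ⟨i, mem_TE.2 fun h => absurd h hi⟩

end ImmediateConsequence

section Closure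

variable {α : Type} {P : Program α} {X Z : Set (Lit α)}

theorem logClosed_of_TE_subset (hZ : TE P X Z ⊆ Z) : LogClosed Z :=
  or_iff_not_imp_left.2 fun hcons =>
    Set.eq_univ_of_forall fun _ => hZ <| mem_TE.2 fun h => absurd h hcons

theorem closedUnder_reduct_of_TE_subset (hZ : TE P X Z ⊆ Z) : ClosedUnder (reduct P X) Z := by
  rintro _ ⟨r, hr, hnbody, rfl⟩ hpbody
  exact hZ <| mem_TE.2 fun _ => ⟨r, hr, ⟨hpbody, hnbody⟩, rfl⟩

theorem Cop_subset_of_TE_subset (hZ : TE P X Z ⊆ Z) : Cop P X ⊆ Z :=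
  Set.sInter_subset_of_mem ⟨logClosed_of_TE_subset hZ, closedUnder_reduct_of_TE_subset hZ⟩

theorem TE_CN_subset {lt : Rule α → Rule α → Prop} : TE P X (CN P lt X) ⊆ CN P lt X := by
  have hstages : Monotone fun i : ℕ => (TN P lt X)^[i] ∅ :=
    TN_mono.monotone_iterate_of_le_map (Set.empty_subset _)
  calc TE P X (⋃ i : ℕ, (TN P lt X)^[i] ∅)
      ⊆ ⋃ i : ℕ, TE P X ((TN P lt X)^[i] ∅) := TE_iUnion_subset_of_directed hstages.directed_le
    _ ⊆ ⋃ i : ℕ, TN P lt X ((TN P lt X)^[i] ∅) := Set.iUnion_mono fun _ => TE_subset_TN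
    _ = ⋃ i : ℕ, (TN P lt X)^[i + 1] ∅ := by simp only [Function.iterate_succ_apply']
    _ ⊆ CN P lt X := Set.iUnion_subset fun i => Set.subset_iUnion_of_subset (i + 1) subset_rfl

end Closure

theorem Cop_subset_CN_general {α : Type} (P : Program α) (lt : Rule α → Rule α → Prop)
    (X : Set (Lit α)) : Cop P X ⊆ CN P lt X :=
  Cop_subset_of_TE_subset TE_CN_subset

/-- `C_Π(X) ⊆ C°_{(Π,<)}(X)`. -/
theorem Cop_subset_CN {α : Type} (P : Program α) (hfin : P.Finite)
    (lt : Rule α → Rule α → Prop)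
    (hirr : ∀ r, ¬ lt r r) (htrans : ∀ r₁ r₂ r₃, lt r₁ r₂ → lt r₂ r₃ → lt r₁ r₃)
    (X : Set (Lit α)) :
    Cop P X ⊆ CN P lt X :=
  Cop_subset_CN_general P lt X
end
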